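/- Gradient bound for the discretized hydrodynamic equation: let M > 0. There exists C > 0 depending only on d and M such that the following holds for every N ∈ ℕ, K > 0 and C₀ > 0. Let f^N : T_N^d × [0,1]^{T_N^d} → ℝ satisfy |f^N(x,u)| ≤ M for all x and u, and let u^N(t,x), t ≥ 0, be a [0,1]-valued solution of ∂_t u^N(t,x) = Δ^N u^N(t,x) + K f^N(x, u^N(t)) for all x ∈ T_N^d. If ‖∇^N u^N(0,x)‖ ≤ C₀ K for all x, then ‖∇^N u^N(t,x)‖ ≤ K (C₀ + C √t) for all t > 0 and all x ∈ T_N^d. -/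

import Mathlib

/-! By linearity write `u = v + w`, where `v` solves the discrete heat equation with the initial
datum of `u`, and `w` solves the forced heat equation with zero initial datum and a forcing term
bounded by `L = K M`.

* For every unit vector `a`, the directional derivative `Σ a_i N (v(x+e_i) - v(x))` again solves the
  heat equation, so by the maximum principle it stays below its initial supremum, which is at most
  `C₀ K` (`heat_dir_le`).
* For `w`, reflect in the direction `e = e_i`: the function
  `h(t,x,k) = w(t, x+(k+1)e) - w(t, x-ke)` solves a heat equation in `k` (and in the coordinates of
  `x` other than the `i`-th) with forcing at most `2L`, and is odd about `k = -1/2`. On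
  `0 ≤ t ≤ T` and `0 ≤ k ≤ N√T` it lies below the concave barrier
  `ψ(k) = A(2k+1) - (L/N²) k(k+1)`, `A = 4L√T/N`: the second difference of `ψ` absorbs the
  forcing, and at the far end `k = ⌊N√T⌋` the crude bound `h ≤ 2LT` is enough. At `k = 0` this
  reads `w(T,x+e) - w(T,x) ≤ 4L√T/N` (`forced_diff_le`).

Both steps rest on one maximum principle for finite systems of differential inequalities
(`max_principle`). Testing the gradient of `u` against unit vectors gives the result with
`C = 4 d M`. -/

open Finset

/-- The discrete torus `T_N^d = (ℤ/Nℤ)^d`. -/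
abbrev Torus (d N : ℕ) := Fin d → ZMod N

/-- The `i`-th unit vector of the discrete torus. -/
def uvec (d N : ℕ) (i : Fin d) : Torus d N := fun j => if j = i then 1 else 0

/-- The discrete Laplacian `Δ^N v(x) = N² Σ_i (v(x+e_i) + v(x-e_i) - 2 v(x))`. -/
noncomputable def lapN (d N : ℕ) (v : Torus d N → ℝ) (x : Torus d N) : ℝ :=
  (N:ℝ)^2 * ∑ i : Fin d, (v (x + uvec d N i) + v (x - uvec d N i) - 2 * v x)

/-- The Euclidean norm `‖∇^N v(x)‖` of the discrete gradient
`∇^N v(x) = (N (v(x+e_i) - v(x)))_{i=1}^d`. -/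
noncomputable def gradNorm (d N : ℕ) (v : Torus d N → ℝ) (x : Torus d N) : ℝ :=
  Real.sqrt (∑ i : Fin d, ((N:ℝ) * (v (x + uvec d N i) - v x))^2)

/-! ### Maximum principle -/

/-- Maximum principle for a finite family of functions: if a positive spatial maximum never has
positive time derivative, a family that starts nonpositive stays nonpositive. -/
lemma max_principle {ι : Type*} [Finite ι] (T : ℝ) (g g' : ℝ → ι → ℝ)
    (hg : ∀ t ∈ Set.Icc 0 T, ∀ i, HasDerivAt (fun s => g s i) (g' t i) t)
    (h0 : ∀ i, g 0 i ≤ 0)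
    (hmax : ∀ t ∈ Set.Icc 0 T, ∀ i, 0 < g t i → (∀ j, g t j ≤ g t i) → g' t i ≤ 0) :
    ∀ t ∈ Set.Icc 0 T, ∀ i, g t i ≤ 0 := by
  intro t ht i
  have hT : 0 ≤ T := ht.1.trans ht.2
  -- Subtracting `ε t` makes the inequality at a maximum strict.
  have key : ∀ ε : ℝ, 0 < ε → g t i - ε * t ≤ 0 := by
    intro ε hε
    have hcd : ∀ j, ∀ s ∈ Set.Icc 0 T,
        HasDerivAt (fun s => g s j - ε * s) (g' s j - ε * 1) s := fun j s hs =>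
      (hg s hs j).sub ((hasDerivAt_id s).const_mul ε)
    have hex : ∀ j, ∃ s ∈ Set.Icc 0 T,
        ∀ r ∈ Set.Icc 0 T, g r j - ε * r ≤ g s j - ε * s := by
      intro j
      obtain ⟨s, hs, hm⟩ := isCompact_Icc.exists_isMaxOn (Set.nonempty_Icc.2 hT)
        (f := fun s => g s j - ε * s)
        (fun s hs => (hcd j s hs).continuousAt.continuousWithinAt)
      exact ⟨s, hs, fun r hr => hm hr⟩
    choose s hs hsm using hex
    have : Nonempty ι := ⟨i⟩
    obtain ⟨j, hj⟩ := Finite.exists_max (fun j => g (s j) j - ε * s j)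
    have hall : ∀ l, ∀ r ∈ Set.Icc 0 T, g r l - ε * r ≤ g (s j) j - ε * s j :=
      fun l r hr => (hsm l r hr).trans (hj l)
    by_contra! hcon
    have hpos : 0 < g (s j) j - ε * s j := hcon.trans_le (hall i t ht)
    have hs0 : 0 < s j := by
      rcases (hs j).1.lt_or_eq with h | h
      · exact h
      · rw [← h] at hpos
        have := h0 j
        linarith
    have hd := hmax (s j) (hs j) j
      (by have := mul_nonneg hε.le (hs j).1; linarith)
      (fun l => by have := hall l (s j) (hs j); linarith)
    have hneg : g' (s j) j - ε * 1 < 0 := by linarith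
    -- A negative derivative forces larger values just to the left of the maximum.
    have hslope := (hasDerivAt_iff_tendsto_slope.1 (hcd j (s j) (hs j))).mono_left
      (nhdsWithin_mono (s j) (show Set.Iio (s j) ⊆ {s j}ᶜ from fun y hy => ne_of_lt hy))
    have hev := hslope.eventually (eventually_lt_nhds hneg)
    have hev2 : ∀ᶠ r in nhdsWithin (s j) (Set.Iio (s j)), r ∈ Set.Ioo 0 (s j) :=
      Ioo_mem_nhdsLT hs0
    obtain ⟨r, hr, hr2⟩ := (hev.and hev2).exists
    have hle := hall j r ⟨hr2.1.le, hr2.2.le.trans (hs j).2⟩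
    rw [slope_def_field] at hr
    have : 0 ≤ (g r j - ε * r - (g (s j) j - ε * s j)) / (r - s j) :=
      div_nonneg_of_nonpos (by linarith) (by linarith [hr2.2])
    linarith
  by_contra! hcon
  have h1 := key (g t i / (2 * (t + 1))) (by have := ht.1; positivity)
  have ht0 := ht.1
  have h2 : g t i / (2 * (t + 1)) * t ≤ g t i / 2 := by
    rw [div_mul_eq_mul_div, div_le_div_iff₀ (by positivity) (by positivity)]
    nlinarith
  linarith

/-! ### The discrete Laplacian and its heat semigroup -/

lemma lapN_nonpos_of_max {d N : ℕ} (v : Torus d N → ℝ) (x : Torus d N)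
    (h : ∀ y, v y ≤ v x) : lapN d N v x ≤ 0 := by
  unfold lapN
  refine mul_nonpos_of_nonneg_of_nonpos (by positivity) (Finset.sum_nonpos fun i _ => ?_)
  have h1 := h (x + uvec d N i)
  have h2 := h (x - uvec d N i)
  linarith

lemma lapN_sub {d N : ℕ} (v w : Torus d N → ℝ) (x : Torus d N) :
    lapN d N (fun y => v y - w y) x = lapN d N v x - lapN d N w x := by
  unfold lapN
  rw [← mul_sub, ← Finset.sum_sub_distrib]
  congr 1
  exact Finset.sum_congr rfl fun i _ => by ring

lemma lapN_neg {d N : ℕ} (v : Torus d N → ℝ) (x : Torus d N) :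
    lapN d N (fun y => - v y) x = - lapN d N v x := by
  unfold lapN
  rw [← mul_neg, ← Finset.sum_neg_distrib]
  congr 1
  exact Finset.sum_congr rfl fun i _ => by ring

/-- The discrete Laplacian as a linear map. -/
noncomputable def lapLin (d N : ℕ) : (Torus d N → ℝ) →ₗ[ℝ] (Torus d N → ℝ) where
  toFun v := lapN d N v
  map_add' v w := by
    funext x
    simp only [lapN, Pi.add_apply]
    rw [← mul_add, ← Finset.sum_add_distrib]
    congr 1
    exact Finset.sum_congr rfl fun i _ => by ring
  map_smul' c v := by
    funext x
    simp only [lapN, Pi.smul_apply, smul_eq_mul, RingHom.id_apply]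
    rw [mul_left_comm c]
    congr 1
    rw [Finset.mul_sum]
    exact Finset.sum_congr rfl fun i _ => by ring

/-- The heat semigroup `exp (t Δ^N)` solves the discrete heat equation. -/
lemma exists_heat (d N : ℕ) [NeZero N] (v0 : Torus d N → ℝ) :
    ∃ v : ℝ → Torus d N → ℝ, v 0 = v0 ∧
      ∀ x t, HasDerivAt (fun s => v s x) (lapN d N (v t) x) t := by
  let A : (Torus d N → ℝ) →L[ℝ] (Torus d N → ℝ) := LinearMap.toContinuousLinearMap (lapLin d N)
  refine ⟨fun t => NormedSpace.exp (t • A) v0, ?_, ?_⟩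
  · simp
  · intro x t
    have h := hasDerivAt_exp_smul_const' (𝕂 := ℝ) A t
    have h2 := h.clm_apply (hasDerivAt_const t v0)
    have h3 := (hasDerivAt_pi.1 h2) x
    simpa [A, lapLin] using h3

/-- Directional derivatives of a solution of the heat equation stay below their initial bound. -/
lemma heat_dir_le {d N : ℕ} [NeZero N] (v : ℝ → Torus d N → ℝ)
    (hv : ∀ x t, HasDerivAt (fun s => v s x) (lapN d N (v t) x) t) (B : ℝ) (a : Fin d → ℝ)
    (h0 : ∀ x, ∑ i, a i * ((N:ℝ) * (v 0 (x + uvec d N i) - v 0 x)) ≤ B)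
    (T : ℝ) (hT : 0 ≤ T) (x : Torus d N) :
    ∑ i, a i * ((N:ℝ) * (v T (x + uvec d N i) - v T x)) ≤ B := by
  have key := max_principle T
    (fun t x => ∑ i, a i * ((N:ℝ) * (v t (x + uvec d N i) - v t x)) - B)
    (fun t x => ∑ i, a i * ((N:ℝ) * (lapN d N (v t) (x + uvec d N i) - lapN d N (v t) x)))
    (fun t _ x => (HasDerivAt.fun_sum fun i _ =>
      (((hv _ t).sub (hv x t)).const_mul (N:ℝ)).const_mul (a i)).sub_const B)
    (fun x => by have := h0 x; linarith)
    (by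
      intro t _ x _ hm
      have h := lapN_nonpos_of_max
        (fun x => ∑ i, a i * ((N:ℝ) * (v t (x + uvec d N i) - v t x))) x
        (fun y => by have := hm y; linarith)
      refine le_of_eq_of_le ?_ h
      -- Differences commute with the Laplacian.
      simp only [lapN]
      simp only [← Finset.sum_add_distrib, Finset.mul_sum, ← Finset.sum_sub_distrib]
      rw [Finset.sum_comm]
      refine Finset.sum_congr rfl fun i _ => Finset.sum_congr rfl fun j _ => ?_
      rw [add_right_comm x (uvec d N j), sub_add_eq_add_sub x (uvec d N i)]
      ring)
    T ⟨hT, le_rfl⟩ x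
  linarith

/-! ### The forced heat equation -/

/-- A solution of the forced heat equation started from zero grows at most linearly in time. -/
lemma forced_le {d N : ℕ} [NeZero N] (w F : ℝ → Torus d N → ℝ) (L : ℝ)
    (hF : ∀ t, 0 ≤ t → ∀ x, |F t x| ≤ L)
    (hw : ∀ x t, 0 ≤ t → HasDerivAt (fun s => w s x) (lapN d N (w t) x + F t x) t)
    (hw0 : ∀ x, w 0 x = 0) (t : ℝ) (ht : 0 ≤ t) (x : Torus d N) : w t x ≤ L * t := by
  have key := max_principle t (fun s x => w s x - L * s)
    (fun s x => lapN d N (w s) x + F s x - L * 1)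
    (fun s hs x => (hw x s hs.1).sub ((hasDerivAt_id s).const_mul L))
    (fun x => by simp [hw0])
    (by
      intro s hs x _ hm
      have h := lapN_nonpos_of_max (w s) x (fun y => by have := hm y; linarith)
      have := (abs_le.1 (hF s hs.1 x)).2
      linarith) t ⟨ht, le_rfl⟩ x
  linarith

lemma neg_forced {d N : ℕ} (w F : ℝ → Torus d N → ℝ)
    (hw : ∀ x t, 0 ≤ t → HasDerivAt (fun s => w s x) (lapN d N (w t) x + F t x) t) :
    ∀ x t, 0 ≤ t → HasDerivAt (fun s => - w s x)
      (lapN d N (fun y => - w t y) x + - F t x) t := by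
  intro x t ht
  rw [lapN_neg, ← neg_add]
  exact (hw x t ht).neg

/-- The one-step difference bound for the forced heat equation, obtained by comparing the reflected
difference `w(x+(k+1)e) - w(x-ke)` with the concave barrier `A(2k+1) - (L/N²) k(k+1)`. -/
lemma forced_diff_le {d N : ℕ} [NeZero N] (w F : ℝ → Torus d N → ℝ) (L : ℝ)
    (hF : ∀ t, 0 ≤ t → ∀ x, |F t x| ≤ L)
    (hw : ∀ x t, 0 ≤ t → HasDerivAt (fun s => w s x) (lapN d N (w t) x + F t x) t)
    (hw0 : ∀ x, w 0 x = 0) (T : ℝ) (hT : 0 < T) (x : Torus d N) (i : Fin d) :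
    (N:ℝ) * (w T (x + uvec d N i) - w T x) ≤ 4 * L * Real.sqrt T := by
  have hN : (0:ℝ) < N := by exact_mod_cast Nat.pos_of_ne_zero (NeZero.ne N)
  have hL : 0 ≤ L := (abs_nonneg _).trans (hF 0 le_rfl x)
  set e := uvec d N i with he
  set σ := (N:ℝ) * Real.sqrt T with hσ
  have hσ0 : 0 ≤ σ := by positivity
  set n := ⌊σ⌋₊ with hn
  have hn1 : (n:ℝ) ≤ σ := Nat.floor_le hσ0
  have hn2 : σ < n + 1 := Nat.lt_floor_add_one σ
  set β := L / (N:ℝ)^2 with hβ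
  have hβ0 : 0 ≤ β := by positivity
  have hβN : (N:ℝ)^2 * β = L := by rw [hβ]; field_simp
  set A := 4 * β * σ with hA
  have hA0 : 0 ≤ A := by positivity
  let ψ : ℕ → ℝ := fun k => A * (2 * k + 1) - β * (k * (k + 1))
  have hψ0 : ∀ k ≤ n, 0 ≤ ψ k := by
    intro k hk
    have hk' : (k:ℝ) ≤ σ := le_trans (by exact_mod_cast hk) hn1
    have h1 : (k:ℝ) * (k + 1) ≤ σ * (4 * (2 * k + 1)) := by
      have hk0 : (0:ℝ) ≤ k := Nat.cast_nonneg k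
      nlinarith
    have h2 := mul_le_mul_of_nonneg_left h1 hβ0
    simp only [ψ, hA]
    nlinarith
  -- At the far end of the range the barrier exceeds the crude bound `2 L T`.
  have hψn : 2 * (L * T) ≤ ψ n := by
    have hσ2 : σ ^ 2 = (N:ℝ)^2 * T := by rw [hσ, mul_pow, Real.sq_sqrt hT.le]
    have h0 : L * T = β * σ ^ 2 := by rw [hσ2, ← hβN]; ring
    have hn0 : (0:ℝ) ≤ n := Nat.cast_nonneg n
    have h1 : 2 * σ ^ 2 ≤ σ * (4 * (2 * n + 1)) - n * (n + 1) := by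
      nlinarith [mul_nonneg hσ0 hn0, mul_nonneg hσ0 (sub_nonneg.2 hn2.le),
        mul_nonneg (sub_nonneg.2 hn1) (by positivity : (0:ℝ) ≤ n + 1)]
    have h2 := mul_le_mul_of_nonneg_left h1 hβ0
    rw [h0]
    simp only [ψ, hA]
    nlinarith
  have key := max_principle (ι := Torus d N × Fin (n+1)) T
    (fun t p => w t (p.1 + ((p.2:ℕ) + 1) • e) - w t (p.1 - (p.2:ℕ) • e) - ψ p.2)
    (fun t p => (lapN d N (w t) (p.1 + ((p.2:ℕ) + 1) • e) + F t (p.1 + ((p.2:ℕ) + 1) • e))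
      - (lapN d N (w t) (p.1 - (p.2:ℕ) • e) + F t (p.1 - (p.2:ℕ) • e)))
    (fun t ht p => ((hw _ t ht.1).sub (hw _ t ht.1)).sub_const _)
    (by
      rintro ⟨y, k⟩
      have := hψ0 k (Nat.lt_succ_iff.1 k.2)
      simp only [hw0]
      linarith)
    (by
      rintro t ht ⟨y, ⟨k, hk⟩⟩ hpos hm
      simp only at hpos hm ⊢
      have hm' : ∀ z l, l ≤ n → w t (z + (l + 1) • e) - w t (z - l • e) - ψ l ≤
          w t (y + (k + 1) • e) - w t (y - k • e) - ψ k :=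
        fun z l hl => hm ⟨z, ⟨l, Nat.lt_succ_iff.2 hl⟩⟩
      rcases (Nat.lt_succ_iff.1 hk).eq_or_lt with hkn | hkn
      · exfalso
        have h1 := forced_le w F L hF hw hw0 t ht.1 (y + (k + 1) • e)
        have h2 := forced_le (fun s z => - w s z) (fun s z => - F s z) L
          (by simpa using hF) (neg_forced w F hw) (by simpa using hw0) t ht.1 (y - k • e)
        have h3 := mul_le_mul_of_nonneg_left ht.2 hL
        rw [hkn] at hpos h1 h2
        linarith
      · have hF1 := (abs_le.1 (hF t ht.1 (y + (k + 1) • e))).2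
        have hF2 := (abs_le.1 (hF t ht.1 (y - k • e))).1
        have hlap : lapN d N (w t) (y + (k + 1) • e) - lapN d N (w t) (y - k • e) ≤
            -(2 * L) := by
          unfold lapN
          rw [← mul_sub, ← Finset.sum_sub_distrib]
          have hsum : ∑ j : Fin d,
              ((w t (y + (k + 1) • e + uvec d N j) + w t (y + (k + 1) • e - uvec d N j)
                - 2 * w t (y + (k + 1) • e))
              - (w t (y - k • e + uvec d N j) + w t (y - k • e - uvec d N j)
                - 2 * w t (y - k • e))) ≤ ∑ j : Fin d, if j = i then -(2 * β) else 0 := by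
            refine Finset.sum_le_sum fun j _ => ?_
            split_ifs with hj
            · -- In the reflected direction the two points move apart or together.
              subst hj
              rw [← he]
              have e1 : y + (k + 1) • e + e = y + (k + 1 + 1) • e := by
                rw [succ_nsmul e (k + 1)]; abel
              have e2 : y + (k + 1) • e - e = y + k • e := by
                rw [succ_nsmul e k]; abel
              have e3 : y - k • e - e = y - (k + 1) • e := by
                rw [succ_nsmul e k]; abel
              rw [e1, e2, e3]
              have hup := hm' y (k + 1) hkn
              rcases k with _ | k
              · -- Moving together from distance one swaps the two points.
                simp only [zero_smul, sub_zero, add_zero, zero_add, one_smul, ψ,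
                  Nat.cast_zero, Nat.cast_one] at hup hpos ⊢
                norm_num at hup hpos ⊢
                linarith
              · have hdn := hm' y k (by omega)
                have e4 : y - (k + 1) • e + e = y - k • e := by
                  rw [succ_nsmul e k]; abel
                rw [e4]
                simp only [ψ] at hup hdn
                push_cast at hup hdn
                linarith
            · -- In the other directions the two points move in parallel.
              have h1 := hm' (y + uvec d N j) k hkn.le
              have h2 := hm' (y - uvec d N j) k hkn.le
              rw [add_right_comm y, add_sub_right_comm y] at h1
              rw [sub_add_eq_add_sub y, sub_right_comm y] at h2
              linarith
          rw [Finset.sum_ite_eq' Finset.univ i, if_pos (Finset.mem_univ i)] at hsum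
          have := mul_le_mul_of_nonneg_left hsum (by positivity : (0:ℝ) ≤ (N:ℝ)^2)
          linarith
        linarith)
    T ⟨hT.le, le_rfl⟩ (x, ⟨0, Nat.succ_pos n⟩)
  simp only [zero_smul, sub_zero, zero_add, one_smul, ψ, Nat.cast_zero] at key
  have hfin : w T (x + e) - w T x ≤ A := by linarith
  have := mul_le_mul_of_nonneg_left hfin hN.le
  refine this.trans (le_of_eq ?_)
  rw [hA, hσ, ← hβN]
  ring

/-! ### The gradient bound -/

/-- The Euclidean norm is the supremum of the pairings with unit vectors. -/
lemma sqrt_le_of_dir {d : ℕ} (G : Fin d → ℝ) (B : ℝ) (hB : 0 ≤ B)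
    (h : ∀ a : Fin d → ℝ, ∑ i, a i ^ 2 = 1 → ∑ i, a i * G i ≤ B) :
    Real.sqrt (∑ i, G i ^ 2) ≤ B := by
  set S := Real.sqrt (∑ i, G i ^ 2) with hS
  have hS2 : S ^ 2 = ∑ i, G i ^ 2 := Real.sq_sqrt (Finset.sum_nonneg fun i _ => sq_nonneg _)
  rcases (Real.sqrt_nonneg (∑ i, G i ^ 2)).eq_or_lt with h0 | h0
  · rw [hS, ← h0]; exact hB
  · rw [← hS] at h0
    have h1 := h (fun i => G i / S) (by
      simp only [div_pow]
      rw [← Finset.sum_div, ← hS2]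
      field_simp)
    refine le_of_eq_of_le ?_ h1
    simp only [div_mul_eq_mul_div, ← pow_two]
    rw [← Finset.sum_div, ← hS2]
    field_simp

/-- Proposition 4.3 (Gradient bound for the discretized hydrodynamic equation): for `M > 0`
there is `C > 0` depending only on `d` and `M` such that for all `N`, `K > 0`, `C₀ > 0`,
every reaction term `f^N` bounded by `M` and every `[0,1]`-valued solution of
`∂_t u^N = Δ^N u^N + K f^N(x, u^N(t))`,
if `‖∇^N u^N(0,·)‖ ≤ C₀ K` then `‖∇^N u^N(t,·)‖ ≤ K (C₀ + C √t)` for all `t > 0`. -/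
theorem gradient_bound_hydrodynamic (d : ℕ) (hd : 1 ≤ d) (M : ℝ) (hM : 0 < M) :
    ∃ C : ℝ, 0 < C ∧
      ∀ (N : ℕ) [NeZero N], ∀ (K C₀ : ℝ), 0 < K → 0 < C₀ →
      ∀ (fN : Torus d N → (Torus d N → ℝ) → ℝ),
        (∀ (x : Torus d N) (u : Torus d N → ℝ),
          (∀ z, u z ∈ Set.Icc (0:ℝ) 1) → |fN x u| ≤ M) →
      ∀ (u : ℝ → Torus d N → ℝ),
        (∀ t, 0 ≤ t → ∀ x, u t x ∈ Set.Icc (0:ℝ) 1) →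
        (∀ (x : Torus d N) (t : ℝ), 0 ≤ t →
          HasDerivAt (fun s => u s x) (lapN d N (u t) x + K * fN x (u t)) t) →
        (∀ x, gradNorm d N (u 0) x ≤ C₀ * K) →
        ∀ t : ℝ, 0 < t → ∀ x, gradNorm d N (u t) x ≤ K * (C₀ + C * Real.sqrt t) := by
  have hd0 : (0:ℝ) < d := by exact_mod_cast hd
  refine ⟨4 * d * M, by positivity, ?_⟩
  intro N _ K C₀ hK hC₀ fN hfN u hu01 hu hgrad t ht x
  obtain ⟨v, hv0, hv⟩ := exists_heat d N (u 0)
  have hw : ∀ y s, 0 ≤ s → HasDerivAt (fun r => u r y - v r y)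
      (lapN d N (fun z => u s z - v s z) y + K * fN y (u s)) s := by
    intro y s hs
    rw [lapN_sub, sub_add_eq_add_sub]
    exact (hu y s hs).sub (hv y s)
  have hF : ∀ s, 0 ≤ s → ∀ y, |K * fN y (u s)| ≤ K * M := by
    intro s hs y
    rw [abs_mul, abs_of_pos hK]
    exact mul_le_mul_of_nonneg_left (hfN y (u s) (hu01 s hs)) hK.le
  have hw0 : ∀ y, u 0 y - v 0 y = 0 := fun y => by rw [hv0, sub_self]
  have hsq := Real.sqrt_nonneg t
  refine sqrt_le_of_dir _ _ (by positivity) fun a ha => ?_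
  have hheat : ∑ i, a i * ((N:ℝ) * (v t (x + uvec d N i) - v t x)) ≤ C₀ * K := by
    refine heat_dir_le v hv _ a (fun y => ?_) t ht.le x
    rw [hv0]
    refine (Real.sum_mul_le_sqrt_mul_sqrt Finset.univ _ _).trans ?_
    rw [ha, Real.sqrt_one, one_mul]
    exact hgrad y
  have hforced : ∀ i, a i * ((N:ℝ) * ((u t (x + uvec d N i) - v t (x + uvec d N i))
      - (u t x - v t x))) ≤ 4 * (K * M) * Real.sqrt t := by
    intro i
    have h1 := forced_diff_le (fun r y => u r y - v r y) (fun s y => K * fN y (u s)) (K * M)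
      hF hw hw0 t ht x i
    have h2 := forced_diff_le (fun r y => -(u r y - v r y)) (fun s y => -(K * fN y (u s))) (K * M)
      (by simpa only [abs_neg] using hF) (neg_forced _ _ hw)
      (fun y => by rw [hw0, neg_zero]) t ht x i
    have hai : |a i| ≤ 1 := by
      rw [← sq_le_one_iff_abs_le_one, ← ha]
      exact Finset.single_le_sum (f := fun j => a j ^ 2) (fun j _ => sq_nonneg _)
        (Finset.mem_univ i)
    refine (le_abs_self _).trans ?_
    rw [abs_mul]
    refine (mul_le_of_le_one_left (abs_nonneg _) hai).trans (abs_le.2 ⟨?_, h1⟩)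
    linarith
  have hsum := Finset.sum_le_sum fun i (_ : i ∈ (Finset.univ : Finset (Fin d))) => hforced i
  rw [Finset.sum_const, Finset.card_univ, Fintype.card_fin, nsmul_eq_mul] at hsum
  calc ∑ i, a i * ((N:ℝ) * (u t (x + uvec d N i) - u t x))
      = ∑ i, a i * ((N:ℝ) * (v t (x + uvec d N i) - v t x))
        + ∑ i, a i * ((N:ℝ) * ((u t (x + uvec d N i) - v t (x + uvec d N i))
          - (u t x - v t x))) := by
        rw [← Finset.sum_add_distrib]
        exact Finset.sum_congr rfl fun i _ => by ring
    _ ≤ K * (C₀ + 4 * d * M * Real.sqrt t) := by linarith
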